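/- Sphere case. Assume c² < −4(b k + k²). Define H(s) = −2 G(s) + 4 μ c (1 − cos s) + 4 μ² sin² s, where G(s) = (k²/2) sin²s + b k (1 − cos s) − k² (1 − cos s)², and set s₁ = sup{ ŝ > 0 : H(s) ≥ 0 for all s ∈ (0, ŝ] }. Let W : (0,∞) → ℝ³ be a nonconstant similarity spherical profile with lim_{r→0⁺} W(r) = (1,0,0) and lim_{r→0⁺} r |W′(r)| = 0, and set s(r) = arccos(W(r)·e₀) ∈ [0,π]. Then s⋆ := lim_{r→∞} s(r) exists, 0 < s⋆ ≤ min{π, s₁}, and s(r) = s⋆ + O(r^{−2}) as r → ∞. -/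

import Mathlib

open Set Filter Asymptotics

/-- Euclidean dot product on `ℝ³`. -/
noncomputable def dot3 (v w : Fin 3 → ℝ) : ℝ := v 0 * w 0 + v 1 * w 1 + v 2 * w 2

/-- Euclidean norm on `ℝ³`. -/
noncomputable def norm3 (v : Fin 3 → ℝ) : ℝ := Real.sqrt (dot3 v v)

/-- Cross product on `ℝ³`. -/
noncomputable def cross3 (v w : Fin 3 → ℝ) : Fin 3 → ℝ :=
  ![v 1 * w 2 - v 2 * w 1, v 2 * w 0 - v 0 * w 2, v 0 * w 1 - v 1 * w 0]

/-- The north pole `e₀ = (1,0,0)`. -/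
noncomputable def e0 : Fin 3 → ℝ := ![1, 0, 0]

/-- `g(w) = (k²/2)(1 − w²) + bk(1 − w) − k²(1 − w)²`. -/
noncomputable def gfun (k b : ℝ) (w : ℝ) : ℝ :=
  k ^ 2 / 2 * (1 - w ^ 2) + b * k * (1 - w) - k ^ 2 * (1 - w) ^ 2

/-- `G(s)` in the sphere case. -/
noncomputable def Gsph (k b : ℝ) (s : ℝ) : ℝ :=
  k ^ 2 / 2 * (Real.sin s) ^ 2 + b * k * (1 - Real.cos s) - k ^ 2 * (1 - Real.cos s) ^ 2

/-- `H(s) = −2G(s) + 4μc(1 − cos s) + 4μ² sin²s`. -/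
noncomputable def Hfun (k b c μ : ℝ) (s : ℝ) : ℝ :=
  -2 * Gsph k b s + 4 * μ * c * (1 - Real.cos s) + 4 * μ ^ 2 * (Real.sin s) ^ 2

/-- A similarity spherical profile on `J ⊆ (0,∞)`: a twice differentiable
`W : J → S² ⊂ ℝ³` solving the reduced similarity equation (5.5). -/
def IsSimProfile (k b c μ : ℝ) (J : Set ℝ) (W : ℝ → Fin 3 → ℝ) : Prop :=
  J ⊆ Ioi (0:ℝ) ∧
  (∀ r ∈ J, DifferentiableAt ℝ W r ∧ DifferentiableAt ℝ (deriv W) r) ∧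
  (∀ r ∈ J, dot3 (W r) (W r) = 1) ∧
  (∀ r ∈ J,
    deriv (deriv W) r + dot3 (deriv W r) (deriv W r) • W r + (1 / r) • deriv W r
      + (deriv (gfun k b) (dot3 (W r) e0) / r ^ 2) • (e0 - dot3 (W r) e0 • W r)
      + μ • (e0 - dot3 (W r) e0 • W r)
      + (c / r - r / 2) • cross3 (W r) (deriv W r) = 0)

/-!
Write `F = 1 - W·e₀`, let `N` be the angular momentum of `W` about `e₀` and `U` its squared speed,
both with `log r` as time. Rotation symmetry about `e₀` gives the momentum law `m' = (r² / 2) F'`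
for `m = N + c F`, and pairing the equation with `W'` shows that `U / 2 + g - 2 μ m` is constant.
The constant vanishes by the behaviour at `r = 0`, so `U = -2 g + 4 μ m`. Since
`N² ≤ U F (2 - F)`, this yields `U, N, m = O(F)`.

The function `F - 2 m / r²` has derivative `4 m / r³`, so bounded `m` forces `F` to converge with
rate `O(r⁻²)`, and `m = O(F)` forbids the limit `0` unless `W` is constant. If `F → 2`, where
`arccos` is not differentiable, then `m - 2 c = O(√(2 - F))` improves the rate to
`√(2 - F) = O(r⁻²)`.

Along the profile `H(s) = U - 4 μ N + 4 μ² sin² s`, which is nonnegative because `N² ≤ U sin² s`.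
As `s` is continuous and starts from `0`, it takes every value between `0` and `s(r)`, whence
`s ≤ s₁`.
-/

open scoped Topology

theorem exists_forall_norm_sub_le_of_tendsto {E : Type*} [SeminormedAddCommGroup E] {f : ℝ → E}
    {a : ℝ} {l : E} (hf : ContinuousOn f (Ici a)) (hl : Tendsto f atTop (𝓝 l)) :
    ∃ x ≥ a, ∀ r ≥ a, ‖f r - l‖ ≤ ‖f x - l‖ := by
  by_cases hzero : ∀ r ≥ a, ‖f r - l‖ = 0
  · exact ⟨a, le_rfl, fun r hr => (hzero r hr).trans_le (norm_nonneg _)⟩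
  push Not at hzero
  obtain ⟨x₀, hx₀, hne⟩ := hzero
  have hnear : ∀ᶠ r in atTop, ‖f r - l‖ < ‖f x₀ - l‖ :=
    (tendsto_iff_norm_sub_tendsto_zero.1 hl).eventually_lt_const (hne.lt_of_le' (norm_nonneg _))
  obtain ⟨R, hR⟩ := eventually_atTop.1 hnear
  refine (hf.sub continuousOn_const).norm.exists_isMaxOn' isClosed_Ici hx₀ ?_
  filter_upwards [mem_inf_of_left (isCompact_Icc (a := a) (b := R)).compl_mem_cocompact,
    mem_inf_of_right (mem_principal_self (Ici a))] with r hr har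
  exact (hR r (not_lt.1 fun h => hr ⟨har, h.le⟩)).le

theorem eq_zero_of_norm_deriv_le_mul_of_eq_zero_right {E : Type*} [NormedAddCommGroup E]
    [NormedSpace ℝ E] {f f' : ℝ → E} {K a b : ℝ} (hf : ∀ r ∈ Icc a b, HasDerivAt f (f' r) r)
    (hK : ∀ r ∈ Icc a b, ‖f' r‖ ≤ K * ‖f r‖) (hb : f b = 0) : ∀ r ∈ Icc a b, f r = 0 := by
  have hmem {t : ℝ} (ht : t ∈ Icc (-b) (-a)) : -t ∈ Icc a b :=
    ⟨le_neg_of_le_neg ht.2, neg_le_of_neg_le ht.1⟩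
  have hrefl : ∀ t ∈ Icc (-b) (-a), HasDerivAt (fun t => f (-t)) (-f' (-t)) t := fun t ht =>
    ((hf (-t) (hmem ht)).scomp t (hasDerivAt_neg t)).congr_deriv (neg_one_smul ℝ _)
  have hzero := eq_zero_of_abs_deriv_le_mul_abs_self_of_eq_zero_right
    (fun t ht => (hrefl t ht).continuousAt.continuousWithinAt)
    (fun t ht => (hrefl t (Ico_subset_Icc_self ht)).hasDerivWithinAt) (by simpa using hb)
    (fun t ht => (norm_neg _).trans_le (hK (-t) (hmem (Ico_subset_Icc_self ht))))
  intro r hr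
  simpa using hzero (-r) ⟨neg_le_neg hr.2, neg_le_neg hr.1⟩

theorem two_mul_mul_le_add_of_sq_le {n u q : ℝ} (t : ℝ) (hu : 0 ≤ u) (hq : 0 ≤ q)
    (hn : n ^ 2 ≤ u * q) : 2 * t * n ≤ u + t ^ 2 * q := by
  refine le_of_abs_le (abs_le_of_sq_le_sq ?_ (by positivity))
  nlinarith [mul_le_mul_of_nonneg_left hn (sq_nonneg t), sq_nonneg (u - t ^ 2 * q)]

theorem abs_le_mul_of_sq_le {t u F C : ℝ} (hC : 0 ≤ C) (hF : F ∈ Icc 0 2) (hu : u ≤ C * F)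
    (ht : t ^ 2 ≤ u * (F * (2 - F))) : |t| ≤ (C + 1) * F := by
  obtain ⟨hF₀, hF₂⟩ := hF
  have : 0 ≤ 2 - F := sub_nonneg.2 hF₂
  refine abs_le_of_sq_le_sq ?_ (by positivity)
  calc t ^ 2 ≤ C * F * (F * (2 - F)) := ht.trans (by gcongr)
    _ ≤ C * F * (F * 2) := by gcongr; linarith
    _ ≤ ((C + 1) * F) ^ 2 := by
        linarith [mul_nonneg (add_nonneg (sq_nonneg C) one_pos.le) (sq_nonneg F)]

theorem abs_le_mul_sqrt_of_sq_le {t u F C : ℝ} (hC : 0 ≤ C) (hF : F ∈ Icc 0 2) (hu : u ≤ C * F)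
    (ht : t ^ 2 ≤ u * (F * (2 - F))) : |t| ≤ (C + 1) * √(2 - F) := by
  obtain ⟨hF₀, hF₂⟩ := hF
  have hF₂' := sub_nonneg.2 hF₂
  refine abs_le_of_sq_le_sq ?_ (by positivity)
  rw [mul_pow, Real.sq_sqrt hF₂']
  calc t ^ 2 ≤ C * F * (F * (2 - F)) := ht.trans (by gcongr)
    _ ≤ C * 2 * (2 * (2 - F)) := by gcongr
    _ ≤ (C + 1) ^ 2 * (2 - F) := by linarith [mul_nonneg (sq_nonneg (C - 1)) hF₂']

theorem arccos_le_pi_mul_sqrt {x : ℝ} (h₁ : -1 ≤ x) (h₂ : x ≤ 1) :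
    Real.arccos x ≤ Real.pi * √(1 - x) := by
  have hcos := Real.cos_le_one_sub_mul_cos_sq (x := Real.arccos x)
    (by rw [abs_of_nonneg (Real.arccos_nonneg x)]; exact Real.arccos_le_pi x)
  rw [Real.cos_arccos h₁ h₂, le_sub_comm, div_mul_eq_mul_div,
    div_le_iff₀ (by positivity)] at hcos
  refine le_of_abs_le (abs_le_of_sq_le_sq ?_ (by positivity))
  rw [mul_pow, Real.sq_sqrt (by linarith)]
  nlinarith [sq_nonneg (Real.arccos x)]

section Momentum

variable {E : Type*} [NormedAddCommGroup E] [NormedSpace ℝ E] {f m : ℝ → E} {a M A : ℝ} {l : E}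

/-- `m` is a *momentum* of `f` on `s` if `m' = (r² / 2) f'` there, so that bounds on `m` control the
variation of `f` at infinity. -/
def IsMomentumOn (m f : ℝ → E) (s : Set ℝ) : Prop :=
  ∀ r ∈ s, ∃ v, HasDerivAt f v r ∧ HasDerivAt m ((r ^ 2 / 2) • v) r

namespace IsMomentumOn

theorem mono {s t : Set ℝ} (h : IsMomentumOn m f t) (hst : s ⊆ t) : IsMomentumOn m f s :=
  fun r hr => h r (hst hr)

theorem sub_const {s : Set ℝ} (h : IsMomentumOn m f s) (e : E) :
    IsMomentumOn (fun r => m r - e) f s := fun r hr =>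
  let ⟨v, hf, hm⟩ := h r hr
  ⟨v, hf, hm.sub_const e⟩

theorem continuousOn {s : Set ℝ} (h : IsMomentumOn m f s) : ContinuousOn f s := fun r hr =>
  let ⟨_, hf, _⟩ := h r hr
  hf.continuousAt.continuousWithinAt

theorem hasDerivAt_sub_smul {s : Set ℝ} (h : IsMomentumOn m f s) {r : ℝ} (hr : r ∈ s)
    (hr0 : r ≠ 0) : HasDerivAt (fun t => f t - (2 / t ^ 2) • m t) ((4 / r ^ 3) • m r) r := by
  obtain ⟨v, hf, hm⟩ := h r hr
  have hcoeff : HasDerivAt (fun t : ℝ => 2 / t ^ 2) (-(4 / r ^ 3)) r := by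
    refine ((hasDerivAt_const r 2).div (hasDerivAt_pow 2 r) (pow_ne_zero 2 hr0)).congr_deriv ?_
    field_simp
    simp only [Nat.cast_ofNat, Nat.add_one_sub_one, pow_one]
    ring
  refine (hf.sub (hcoeff.smul hm)).congr_deriv ?_
  rw [smul_smul, show 2 / r ^ 2 * (r ^ 2 / 2) = 1 by field_simp]
  module

-- `f - 2m/r²` has derivative `4m/r³`, which no longer involves `f'` and is integrable at infinity.
theorem norm_sub_le (h : IsMomentumOn m f (Ici a)) (ha : 0 < a) (hM : ∀ r ≥ a, ‖m r‖ ≤ M)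
    {b : ℝ} (hab : a ≤ b) : ‖f b - f a‖ ≤ 4 * M / a ^ 2 := by
  set p : ℝ → E := fun t => f t - (2 / t ^ 2) • m t with hp
  have hp' (r : ℝ) (hr : a ≤ r) : HasDerivAt (fun t => p t - p a) ((4 / r ^ 3) • m r) r :=
    (h.hasDerivAt_sub_smul hr (ha.trans_le hr).ne').sub_const _
  have hφ (r : ℝ) (hr : a ≤ r) :
      HasDerivAt (fun t : ℝ => 2 * M / a ^ 2 - 2 * M / t ^ 2) (4 * M / r ^ 3) r := by
    have hr0 : r ≠ 0 := (ha.trans_le hr).ne'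
    refine (((hasDerivAt_const r (2 * M)).div (hasDerivAt_pow 2 r)
      (pow_ne_zero 2 hr0)).const_sub _).congr_deriv ?_
    field_simp
    simp only [Nat.cast_ofNat, Nat.add_one_sub_one, pow_one]
    ring
  have hsmul {q : ℝ} (hq : 0 ≤ q) {r : ℝ} (hr : a ≤ r) : ‖q • m r‖ ≤ q * M := by
    rw [norm_smul, Real.norm_of_nonneg hq]
    exact mul_le_mul_of_nonneg_left (hM r hr) hq
  have hpb : ‖p b - p a‖ ≤ 2 * M / a ^ 2 - 2 * M / b ^ 2 := by
    refine image_norm_le_of_norm_deriv_right_le_deriv_boundary'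
      (fun r hr => (hp' r hr.1).continuousAt.continuousWithinAt)
      (fun r hr => (hp' r hr.1).hasDerivWithinAt) (by simp)
      (fun r hr => (hφ r hr.1).continuousAt.continuousWithinAt)
      (fun r hr => (hφ r hr.1).hasDerivWithinAt) (fun r hr => ?_) (right_mem_Icc.2 hab)
    have hr0 : 0 < r := ha.trans_le hr.1
    exact (hsmul (by positivity) hr.1).trans_eq (by ring)
  calc ‖f b - f a‖ = ‖(p b - p a) + (2 / b ^ 2) • m b - (2 / a ^ 2) • m a‖ := by
        simp only [hp]; congr 1; abel
    _ ≤ ‖p b - p a‖ + ‖(2 / b ^ 2) • m b‖ + ‖(2 / a ^ 2) • m a‖ :=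
        (_root_.norm_sub_le _ _).trans (by gcongr; exact norm_add_le _ _)
    _ ≤ (2 * M / a ^ 2 - 2 * M / b ^ 2) + 2 / b ^ 2 * M + 2 / a ^ 2 * M := by
        gcongr
        exacts [hsmul (by positivity) hab, hsmul (by positivity) le_rfl]
    _ = 4 * M / a ^ 2 := by ring

theorem exists_tendsto [CompleteSpace E] (h : IsMomentumOn m f (Ici a)) (ha : 0 < a)
    (hM : ∀ r ≥ a, ‖m r‖ ≤ M) : ∃ l, Tendsto f atTop (𝓝 l) := by
  have hlim : Tendsto (fun r : ℝ => 4 * M / r ^ 2) atTop (𝓝 0) :=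
    tendsto_const_nhds.div_atTop (tendsto_pow_atTop two_ne_zero)
  refine cauchySeq_tendsto_of_complete (Metric.cauchySeq_iff'.2 fun ε hε => ?_)
  obtain ⟨R, hRε, haR⟩ := ((hlim.eventually_lt_const hε).and (eventually_ge_atTop a)).exists
  refine ⟨R, fun r hr => ?_⟩
  rw [dist_eq_norm]
  exact ((h.mono (Ici_subset_Ici.2 haR)).norm_sub_le (ha.trans_le haR)
    (fun t ht => hM t (haR.trans ht)) hr).trans_lt hRε

theorem norm_sub_limit_le (h : IsMomentumOn m f (Ici a)) (ha : 0 < a)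
    (hM : ∀ r ≥ a, ‖m r‖ ≤ M) (hl : Tendsto f atTop (𝓝 l)) : ‖f a - l‖ ≤ 4 * M / a ^ 2 := by
  rw [norm_sub_rev]
  refine le_of_tendsto (hl.sub_const _).norm ?_
  filter_upwards [eventually_ge_atTop a] with b hb
  exact h.norm_sub_le ha hM hb

-- At a maximum point of `‖f - l‖` the hypothesis bounds `m` on the whole remaining half-line by its
-- value there, so `norm_sub_limit_le` becomes a self-improving inequality.
theorem sqrt_norm_sub_limit_le (h : IsMomentumOn m f (Ici a)) (ha : 0 < a) (hA : 0 ≤ A)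
    (hmA : ∀ r ≥ a, ‖m r‖ ≤ A * √‖f r - l‖) (hl : Tendsto f atTop (𝓝 l)) :
    √‖f a - l‖ ≤ 4 * A / a ^ 2 := by
  obtain ⟨x, hax, hx⟩ := exists_forall_norm_sub_le_of_tendsto h.continuousOn hl
  have hx0 : 0 < x := ha.trans_le hax
  have hself : ‖f x - l‖ ≤ 4 * (A * √‖f x - l‖) / x ^ 2 :=
    (h.mono (Ici_subset_Ici.2 hax)).norm_sub_limit_le hx0 (fun t ht =>
      (hmA t (hax.trans ht)).trans (by gcongr; exact hx t (hax.trans ht))) hl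
  calc √‖f a - l‖ ≤ √‖f x - l‖ := Real.sqrt_le_sqrt (hx a le_rfl)
    _ ≤ 4 * A / x ^ 2 := by
      rcases (Real.sqrt_nonneg ‖f x - l‖).eq_or_lt with hzero | hpos
      · rw [← hzero]; positivity
      · refine le_of_mul_le_mul_right ?_ hpos
        rw [Real.mul_self_sqrt (norm_nonneg _)]
        exact hself.trans_eq (by ring)
    _ ≤ 4 * A / a ^ 2 := by gcongr

theorem eventually_eq_limit (h : IsMomentumOn m f (Ici a)) (ha : 0 < a)
    (hmA : ∀ r ≥ a, ‖m r‖ ≤ A * ‖f r - l‖) (hl : Tendsto f atTop (𝓝 l)) :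
    ∀ᶠ r in atTop, f r = l := by
  have hsmall : ∀ᶠ r : ℝ in atTop, 4 * |A| / r ^ 2 < 1 :=
    (tendsto_const_nhds.div_atTop (tendsto_pow_atTop two_ne_zero)).eventually_lt_const one_pos
  obtain ⟨R, hR⟩ := eventually_atTop.1 (hsmall.and (eventually_ge_atTop a))
  have haR : a ≤ R := (hR R le_rfl).2
  obtain ⟨x, hRx, hx⟩ := exists_forall_norm_sub_le_of_tendsto
    (h.mono (Ici_subset_Ici.2 haR)).continuousOn hl
  have hax : a ≤ x := haR.trans hRx
  have hself : ‖f x - l‖ ≤ 4 * |A| / x ^ 2 * ‖f x - l‖ :=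
    ((h.mono (Ici_subset_Ici.2 hax)).norm_sub_limit_le (ha.trans_le hax) (fun t ht =>
      (hmA t (hax.trans ht)).trans
        (mul_le_mul (le_abs_self A) (hx t (hRx.trans ht)) (norm_nonneg _) (abs_nonneg A)))
      hl).trans_eq (by ring)
  have hzero : ‖f x - l‖ = 0 := by nlinarith [(hR x hRx).1, norm_nonneg (f x - l)]
  filter_upwards [eventually_ge_atTop R] with r hr
  exact sub_eq_zero.1 (norm_le_zero_iff.1 ((hx r hr).trans_eq hzero))

end IsMomentumOn

end Momentum

section Sphere

variable {v w : ℝ → Fin 3 → ℝ} {x y : Fin 3 → ℝ} {r : ℝ}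

theorem dot3_e0 (x : Fin 3 → ℝ) : dot3 x e0 = x 0 := by
  simp [dot3, e0]

theorem dot3_zero_right (x : Fin 3 → ℝ) : dot3 x 0 = 0 := by
  simp [dot3]

theorem cross3_self (x : Fin 3 → ℝ) : cross3 x x = 0 := by
  simp [cross3, mul_comm]

theorem dot3_self_nonneg (x : Fin 3 → ℝ) : 0 ≤ dot3 x x :=
  add_nonneg (add_nonneg (mul_self_nonneg _) (mul_self_nonneg _)) (mul_self_nonneg _)

theorem hasDerivAt_dot3 {dv dw : Fin 3 → ℝ} (hv : HasDerivAt v dv r) (hw : HasDerivAt w dw r) :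
    HasDerivAt (fun t => dot3 (v t) (w t)) (dot3 dv (w r) + dot3 (v r) dw) r := by
  have hmul (i : Fin 3) := (hasDerivAt_pi.1 hv i).mul (hasDerivAt_pi.1 hw i)
  refine (((hmul 0).add (hmul 1)).add (hmul 2)).congr_deriv ?_
  simp only [dot3]
  ring

theorem hasDerivAt_cross3 {dv dw : Fin 3 → ℝ} (hv : HasDerivAt v dv r) (hw : HasDerivAt w dw r) :
    HasDerivAt (fun t => cross3 (v t) (w t)) (cross3 dv (w r) + cross3 (v r) dw) r := by
  have hmul (i j : Fin 3) := (hasDerivAt_pi.1 hv i).mul (hasDerivAt_pi.1 hw j)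
  refine hasDerivAt_pi.2 fun i => ?_
  fin_cases i
  · exact ((hmul 1 2).sub (hmul 2 1)).congr_deriv (by simp [cross3]; ring)
  · exact ((hmul 2 0).sub (hmul 0 2)).congr_deriv (by simp [cross3]; ring)
  · exact ((hmul 0 1).sub (hmul 1 0)).congr_deriv (by simp [cross3]; ring)

theorem dot3_e0_mem_Icc (hx : dot3 x x = 1) : dot3 x e0 ∈ Icc (-1) 1 := by
  rw [dot3_e0]
  exact abs_le.1 (abs_le_one_iff_mul_self_le_one.2
    (by rw [dot3] at hx; linarith [mul_self_nonneg (x 1), mul_self_nonneg (x 2)]))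

theorem eq_e0_of_dot3_e0_eq_one (hx : dot3 x x = 1) (h : dot3 x e0 = 1) : x = e0 := by
  rw [dot3_e0] at h
  rw [dot3, h] at hx
  have h₁ : x 1 = 0 := mul_self_eq_zero.1
    (by linarith [mul_self_nonneg (x 1), mul_self_nonneg (x 2)])
  have h₂ : x 2 = 0 := mul_self_eq_zero.1
    (by linarith [mul_self_nonneg (x 1), mul_self_nonneg (x 2)])
  ext i
  fin_cases i <;> simp [e0, h, h₁, h₂]

-- Pythagoras for the components of the tangent vector `y` along the meridian and the parallel
-- through `x`.
theorem dot3_self_mul_one_sub_sq (hx : dot3 x x = 1) (hxy : dot3 x y = 0) :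
    dot3 y y * (1 - dot3 x e0 ^ 2) = dot3 y e0 ^ 2 + dot3 (cross3 x y) e0 ^ 2 := by
  simp only [dot3_e0]
  simp only [dot3, cross3, Matrix.cons_val_zero] at *
  linear_combination (-(y 1 * y 1 + y 2 * y 2)) * hx
    + (x 1 * y 1 + x 2 * y 2 - x 0 * y 0) * hxy

end Sphere

/-- The defect `F = 1 − W·e₀`, which vanishes at the north pole and equals `2` at the south pole. -/
noncomputable def poleDefect (W : ℝ → Fin 3 → ℝ) (r : ℝ) : ℝ :=
  1 - dot3 (W r) e0

/-- The angular momentum `N` of `W` about the axis `e₀`, with `log r` as time. -/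
noncomputable def axialMomentum (W : ℝ → Fin 3 → ℝ) (r : ℝ) : ℝ :=
  r * dot3 (cross3 (W r) (deriv W r)) e0

/-- The squared speed `U` of `W`, with `log r` as time. -/
noncomputable def logSpeedSq (W : ℝ → Fin 3 → ℝ) (r : ℝ) : ℝ :=
  r ^ 2 * dot3 (deriv W r) (deriv W r)

/-- The axial momentum `m = N + c F` corrected so that the term `c / r` of the profile equation
drops out of its derivative; it is a momentum of `F` in the sense of `IsMomentumOn`. -/
noncomputable def reducedMomentum (c : ℝ) (W : ℝ → Fin 3 → ℝ) (r : ℝ) : ℝ :=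
  axialMomentum W r + c * poleDefect W r

/-- The conserved quantity `U / 2 + g - 2 μ m` of the profile equation. -/
noncomputable def reducedEnergy (k b c μ : ℝ) (W : ℝ → Fin 3 → ℝ) (r : ℝ) : ℝ :=
  logSpeedSq W r / 2 + gfun k b (dot3 (W r) e0) - 2 * μ * reducedMomentum c W r

/-- The angle `s(r) = arccos (W(r)·e₀)` between `W` and the north pole. -/
noncomputable def colatitude (W : ℝ → Fin 3 → ℝ) (r : ℝ) : ℝ :=
  Real.arccos (dot3 (W r) e0)

section Potential

variable {k b c μ w : ℝ}

theorem differentiable_gfun (k b : ℝ) : Differentiable ℝ (gfun k b) := by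
  unfold gfun
  fun_prop

theorem gfun_one (k b : ℝ) : gfun k b 1 = 0 := by
  simp [gfun]

theorem neg_gfun_le (k b : ℝ) (hw : w ∈ Icc (-1) 1) :
    -gfun k b w ≤ (|k ^ 2 + b * k| + 3 * k ^ 2) * (1 - w) := by
  have hF : 0 ≤ 1 - w := sub_nonneg.2 hw.2
  calc -gfun k b w = -(k ^ 2 + b * k) * (1 - w) + 3 / 2 * k ^ 2 * (1 - w) * (1 - w) := by
        simp only [gfun]; ring
    _ ≤ |k ^ 2 + b * k| * (1 - w) + 3 / 2 * k ^ 2 * (1 - w) * 2 := by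
        gcongr
        · exact neg_le_abs _
        · linarith [hw.1]
    _ = (|k ^ 2 + b * k| + 3 * k ^ 2) * (1 - w) := by ring

theorem Hfun_arccos (hw : w ∈ Icc (-1) 1) : Hfun k b c μ (Real.arccos w) =
    -2 * gfun k b w + 4 * μ * c * (1 - w) + 4 * μ ^ 2 * (1 - w ^ 2) := by
  rw [Hfun, Gsph, Real.sin_sq, Real.cos_arccos hw.1 hw.2, gfun]

end Potential

section Limits

variable {W : ℝ → Fin 3 → ℝ} {L : Filter ℝ} {l : ℝ}

theorem logSpeedSq_nonneg (W : ℝ → Fin 3 → ℝ) (r : ℝ) : 0 ≤ logSpeedSq W r :=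
  mul_nonneg (sq_nonneg r) (dot3_self_nonneg _)

theorem tendsto_colatitude (hl : Tendsto (poleDefect W) L (𝓝 l)) :
    Tendsto (colatitude W) L (𝓝 (Real.arccos (1 - l))) :=
  (Real.continuous_arccos.tendsto _).comp ((hl.const_sub 1).congr fun _ => sub_sub_cancel _ _)

theorem tendsto_dot3_e0 (h0 : Tendsto W L (𝓝 e0)) :
    Tendsto (fun t => dot3 (W t) e0) L (𝓝 1) := by
  simp only [dot3_e0]
  exact tendsto_pi_nhds.1 h0 0

theorem tendsto_poleDefect_zero (h0 : Tendsto W L (𝓝 e0)) :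
    Tendsto (poleDefect W) L (𝓝 0) := by
  have h := (tendsto_dot3_e0 h0).const_sub 1
  rw [sub_self] at h
  exact h

theorem tendsto_logSpeedSq_zero
    (h1 : Tendsto (fun t => t * norm3 (deriv W t)) L (𝓝 0)) :
    Tendsto (logSpeedSq W) L (𝓝 0) := by
  have hsq := h1.pow 2
  rw [zero_pow two_ne_zero] at hsq
  refine hsq.congr fun t => ?_
  rw [mul_pow, norm3, Real.sq_sqrt (dot3_self_nonneg _), logSpeedSq]

theorem tendsto_colatitude_zero (h0 : Tendsto W L (𝓝 e0)) :
    Tendsto (colatitude W) L (𝓝 0) := by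
  have h := (Real.continuous_arccos.tendsto 1).comp (tendsto_dot3_e0 h0)
  rw [Real.arccos_one] at h
  exact h

end Limits

namespace IsSimProfile

variable {k b c μ r : ℝ} {J : Set ℝ} {W : ℝ → Fin 3 → ℝ}

section Local

theorem ne_zero (hW : IsSimProfile k b c μ J W) (hr : r ∈ J) : r ≠ 0 :=
  (mem_Ioi.1 (hW.1 hr)).ne'

theorem hasDerivAt (hW : IsSimProfile k b c μ J W) (hr : r ∈ J) : HasDerivAt W (deriv W r) r :=
  (hW.2.1 r hr).1.hasDerivAt

theorem hasDerivAt_deriv (hW : IsSimProfile k b c μ J W) (hr : r ∈ J) :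
    HasDerivAt (deriv W) (deriv (deriv W) r) r :=
  (hW.2.1 r hr).2.hasDerivAt

theorem dot3_self (hW : IsSimProfile k b c μ J W) (hr : r ∈ J) : dot3 (W r) (W r) = 1 :=
  hW.2.2.1 r hr

theorem dot3_deriv (hW : IsSimProfile k b c μ J W) (hJ : J ∈ 𝓝 r) :
    dot3 (W r) (deriv W r) = 0 := by
  have hr := mem_of_mem_nhds hJ
  have hconst : HasDerivAt (fun t => dot3 (W t) (W t)) 0 r :=
    (hasDerivAt_const r 1).congr_of_eventuallyEq (mem_of_superset hJ fun t ht => hW.dot3_self ht)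
  have hcomm : dot3 (deriv W r) (W r) = dot3 (W r) (deriv W r) := by simp only [dot3]; ring
  linarith [(hasDerivAt_dot3 (hW.hasDerivAt hr) (hW.hasDerivAt hr)).unique hconst]

theorem poleDefect_mem_Icc (hW : IsSimProfile k b c μ J W) (hr : r ∈ J) :
    poleDefect W r ∈ Icc 0 2 := by
  obtain ⟨hlow, hup⟩ := dot3_e0_mem_Icc (hW.dot3_self hr)
  constructor <;> simp only [poleDefect] <;> linarith

theorem hasDerivAt_poleDefect (hW : IsSimProfile k b c μ J W) (hr : r ∈ J) :
    HasDerivAt (poleDefect W) (-dot3 (deriv W r) e0) r := by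
  have h := (hasDerivAt_dot3 (hW.hasDerivAt hr) (hasDerivAt_const r e0)).const_sub 1
  exact h.congr_deriv (by rw [dot3_zero_right, add_zero])

theorem logSpeedSq_mul_poleDefect (hW : IsSimProfile k b c μ J W) (hJ : J ∈ 𝓝 r) :
    logSpeedSq W r * (poleDefect W r * (2 - poleDefect W r)) =
      (r * dot3 (deriv W r) e0) ^ 2 + axialMomentum W r ^ 2 := by
  simp only [logSpeedSq, poleDefect, axialMomentum]
  linear_combination
    r ^ 2 * dot3_self_mul_one_sub_sq (hW.dot3_self (mem_of_mem_nhds hJ)) (hW.dot3_deriv hJ)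

theorem axialMomentum_sq_le (hW : IsSimProfile k b c μ J W) (hJ : J ∈ 𝓝 r) :
    axialMomentum W r ^ 2 ≤ logSpeedSq W r * (poleDefect W r * (2 - poleDefect W r)) := by
  rw [hW.logSpeedSq_mul_poleDefect hJ]
  exact le_add_of_nonneg_left (sq_nonneg _)

theorem mul_deriv_sq_le (hW : IsSimProfile k b c μ J W) (hJ : J ∈ 𝓝 r) :
    (r * dot3 (deriv W r) e0) ^ 2 ≤
      logSpeedSq W r * (poleDefect W r * (2 - poleDefect W r)) := by
  rw [hW.logSpeedSq_mul_poleDefect hJ]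
  exact le_add_of_nonneg_right (sq_nonneg _)

-- The profile equation, multiplied by `r` and paired with `e₀ × W`.
theorem mul_axial_torque (hW : IsSimProfile k b c μ J W) (hJ : J ∈ 𝓝 r) :
    r * dot3 (cross3 (W r) (deriv (deriv W) r)) e0 =
      -dot3 (cross3 (W r) (deriv W r)) e0 + (c - r ^ 2 / 2) * dot3 (deriv W r) e0 := by
  have hr := mem_of_mem_nhds hJ
  have hode := hW.2.2.2 r hr
  have h₁ := congrFun hode 1
  have h₂ := congrFun hode 2
  have hunit := hW.dot3_self hr
  have horth := hW.dot3_deriv hJ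
  have hinv : r * (1 / r) = 1 := mul_one_div_cancel (hW.ne_zero hr)
  have hcoeff : r * (c / r - r / 2) = c - r ^ 2 / 2 := by
    have := hW.ne_zero hr
    field_simp
  simp only [dot3_e0] at *
  simp only [Pi.add_apply, Pi.smul_apply, Pi.sub_apply, Pi.zero_apply, smul_eq_mul, dot3, cross3,
    e0, Matrix.cons_val_zero, Matrix.cons_val_one, Matrix.cons_val] at *
  linear_combination r * (W r 1 * h₂ - W r 2 * h₁)
    - (W r 1 * deriv W r 2 - W r 2 * deriv W r 1) * hinv
    - (W r 1 * (W r 0 * deriv W r 1 - W r 1 * deriv W r 0)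
        - W r 2 * (W r 2 * deriv W r 0 - W r 0 * deriv W r 2)) * hcoeff
    + (c - r ^ 2 / 2) * deriv W r 0 * hunit - (c - r ^ 2 / 2) * W r 0 * horth

-- The profile equation, multiplied by `r²` and paired with `W'`.
theorem sq_mul_power (hW : IsSimProfile k b c μ J W) (hJ : J ∈ 𝓝 r) :
    r ^ 2 * dot3 (deriv W r) (deriv (deriv W) r) =
      -(r * dot3 (deriv W r) (deriv W r))
        - (deriv (gfun k b) (dot3 (W r) e0) + μ * r ^ 2) * dot3 (deriv W r) e0 := by
  have hr := mem_of_mem_nhds hJ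
  have hode := hW.2.2.2 r hr
  have h₀ := congrFun hode 0
  have h₁ := congrFun hode 1
  have h₂ := congrFun hode 2
  have horth := hW.dot3_deriv hJ
  have hinv : r ^ 2 * (1 / r) = r := by
    have := hW.ne_zero hr
    field_simp
  have hcoeff : r ^ 2 * (deriv (gfun k b) (dot3 (W r) e0) / r ^ 2) =
      deriv (gfun k b) (dot3 (W r) e0) := mul_div_cancel₀ _ (pow_ne_zero 2 (hW.ne_zero hr))
  simp only [dot3_e0] at *
  simp only [Pi.add_apply, Pi.smul_apply, Pi.sub_apply, Pi.zero_apply, smul_eq_mul, dot3, cross3,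
    e0, Matrix.cons_val_zero, Matrix.cons_val_one, Matrix.cons_val] at *
  linear_combination r ^ 2 * (deriv W r 0 * h₀ + deriv W r 1 * h₁ + deriv W r 2 * h₂)
    - (deriv W r 0 * deriv W r 0 + deriv W r 1 * deriv W r 1 + deriv W r 2 * deriv W r 2) * hinv
    - deriv W r 0 * hcoeff
    + (r ^ 2 * (deriv (gfun k b) (W r 0) / r ^ 2) * W r 0 + r ^ 2 * μ * W r 0
        - r ^ 2 * (deriv W r 0 * deriv W r 0 + deriv W r 1 * deriv W r 1
          + deriv W r 2 * deriv W r 2)) * horth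

theorem hasDerivAt_reducedMomentum (hW : IsSimProfile k b c μ J W) (hJ : J ∈ 𝓝 r) :
    HasDerivAt (reducedMomentum c W) (r ^ 2 / 2 * -dot3 (deriv W r) e0) r := by
  have hr := mem_of_mem_nhds hJ
  have hcross := hasDerivAt_dot3
    (hasDerivAt_cross3 (hW.hasDerivAt hr) (hW.hasDerivAt_deriv hr)) (hasDerivAt_const r e0)
  refine (((hasDerivAt_id r).mul hcross).add
    ((hW.hasDerivAt_poleDefect hr).const_mul c)).congr_deriv ?_
  rw [cross3_self, zero_add, dot3_zero_right, add_zero, id]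
  linear_combination hW.mul_axial_torque hJ

theorem isMomentumOn (hW : IsSimProfile k b c μ J W) (hJ : IsOpen J) :
    IsMomentumOn (reducedMomentum c W) (poleDefect W) J := fun _ hr =>
  ⟨_, hW.hasDerivAt_poleDefect hr, hW.hasDerivAt_reducedMomentum (hJ.mem_nhds hr)⟩

theorem hasDerivAt_reducedEnergy (hW : IsSimProfile k b c μ J W) (hJ : J ∈ 𝓝 r) :
    HasDerivAt (reducedEnergy k b c μ W) 0 r := by
  have hr := mem_of_mem_nhds hJ
  have hspeed := ((hasDerivAt_pow 2 r).mul
    (hasDerivAt_dot3 (hW.hasDerivAt_deriv hr) (hW.hasDerivAt_deriv hr))).div_const 2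
  have hpot := (differentiable_gfun k b (dot3 (W r) e0)).hasDerivAt.comp r
    (hasDerivAt_dot3 (hW.hasDerivAt hr) (hasDerivAt_const r e0))
  refine ((hspeed.add hpot).sub
    ((hW.hasDerivAt_reducedMomentum hJ).const_mul (2 * μ))).congr_deriv ?_
  have hpower := hW.sq_mul_power hJ
  have hcomm : dot3 (deriv (deriv W) r) (deriv W r) = dot3 (deriv W r) (deriv (deriv W) r) := by
    simp only [dot3]; ring
  rw [hcomm, dot3_zero_right]
  simp only [Nat.cast_ofNat, Nat.add_one_sub_one, pow_one]
  linear_combination hpower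

theorem continuousOn_colatitude (hW : IsSimProfile k b c μ J W) : ContinuousOn (colatitude W) J :=
  fun _ hr => (Real.continuous_arccos.continuousAt.comp
    (hasDerivAt_dot3 (hW.hasDerivAt hr) (hasDerivAt_const _ e0)).continuousAt).continuousWithinAt

theorem exists_poleDefect_ne_zero (hW : IsSimProfile k b c μ J W)
    (hne : ∃ r₁ ∈ J, ∃ r₂ ∈ J, W r₁ ≠ W r₂) : ∃ r ∈ J, poleDefect W r ≠ 0 := by
  by_contra! hzero
  obtain ⟨r₁, hr₁, r₂, hr₂, hne⟩ := hne
  have heq {r : ℝ} (hr : r ∈ J) : W r = e0 :=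
    eq_e0_of_dot3_e0_eq_one (hW.dot3_self hr) (sub_eq_zero.1 (hzero r hr)).symm
  exact hne ((heq hr₁).trans (heq hr₂).symm)

end Local

section Bounds

variable {C : ℝ}

theorem abs_axialMomentum_le (hW : IsSimProfile k b c μ J W) (hJ : J ∈ 𝓝 r) (hC : 0 ≤ C)
    (hU : logSpeedSq W r ≤ C * poleDefect W r) :
    |axialMomentum W r| ≤ (C + 1) * poleDefect W r :=
  abs_le_mul_of_sq_le hC (hW.poleDefect_mem_Icc (mem_of_mem_nhds hJ)) hU
    (hW.axialMomentum_sq_le hJ)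

theorem abs_axialMomentum_le_sqrt (hW : IsSimProfile k b c μ J W) (hJ : J ∈ 𝓝 r) (hC : 0 ≤ C)
    (hU : logSpeedSq W r ≤ C * poleDefect W r) :
    |axialMomentum W r| ≤ (C + 1) * √(2 - poleDefect W r) :=
  abs_le_mul_sqrt_of_sq_le hC (hW.poleDefect_mem_Icc (mem_of_mem_nhds hJ)) hU
    (hW.axialMomentum_sq_le hJ)

theorem abs_mul_deriv_le (hW : IsSimProfile k b c μ J W) (hJ : J ∈ 𝓝 r) (hC : 0 ≤ C)
    (hU : logSpeedSq W r ≤ C * poleDefect W r) :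
    |r * dot3 (deriv W r) e0| ≤ (C + 1) * poleDefect W r :=
  abs_le_mul_of_sq_le hC (hW.poleDefect_mem_Icc (mem_of_mem_nhds hJ)) hU
    (hW.mul_deriv_sq_le hJ)

theorem abs_reducedMomentum_le (hW : IsSimProfile k b c μ J W) (hJ : J ∈ 𝓝 r) (hC : 0 ≤ C)
    (hU : logSpeedSq W r ≤ C * poleDefect W r) :
    |reducedMomentum c W r| ≤ (C + 1 + |c|) * poleDefect W r := by
  have hF := (hW.poleDefect_mem_Icc (mem_of_mem_nhds hJ)).1
  calc |reducedMomentum c W r| ≤ |axialMomentum W r| + |c * poleDefect W r| := abs_add_le _ _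
    _ ≤ (C + 1) * poleDefect W r + |c| * poleDefect W r := by
        rw [abs_mul, abs_of_nonneg hF]
        gcongr
        exact hW.abs_axialMomentum_le hJ hC hU
    _ = (C + 1 + |c|) * poleDefect W r := by ring

theorem abs_reducedMomentum_sub_le (hW : IsSimProfile k b c μ J W) (hJ : J ∈ 𝓝 r) (hC : 0 ≤ C)
    (hU : logSpeedSq W r ≤ C * poleDefect W r) :
    |reducedMomentum c W r - 2 * c| ≤ (C + 1 + 2 * |c|) * √(2 - poleDefect W r) := by
  obtain ⟨hF₀, hF₂⟩ := hW.poleDefect_mem_Icc (mem_of_mem_nhds hJ)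
  have hsqrt : 2 - poleDefect W r ≤ 2 * √(2 - poleDefect W r) := by
    calc 2 - poleDefect W r = √(2 - poleDefect W r) * √(2 - poleDefect W r) :=
          (Real.mul_self_sqrt (sub_nonneg.2 hF₂)).symm
      _ ≤ 2 * √(2 - poleDefect W r) := by
          gcongr
          exact Real.sqrt_le_iff.2 ⟨zero_le_two, by linarith⟩
  calc |reducedMomentum c W r - 2 * c|
      = |axialMomentum W r - c * (2 - poleDefect W r)| := by
        rw [reducedMomentum]; congr 1; ring
    _ ≤ |axialMomentum W r| + |c * (2 - poleDefect W r)| := abs_sub _ _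
    _ ≤ (C + 1) * √(2 - poleDefect W r) + |c| * (2 * √(2 - poleDefect W r)) := by
        rw [abs_mul, abs_of_nonneg (sub_nonneg.2 hF₂)]
        gcongr
        exact hW.abs_axialMomentum_le_sqrt hJ hC hU
    _ = (C + 1 + 2 * |c|) * √(2 - poleDefect W r) := by ring

end Bounds

section Asymptotics

variable {C l : ℝ}

theorem poleDefect_ne_zero_of_le (hW : IsSimProfile k b c μ (Ioi 0) W) (hC : 0 ≤ C)
    (hU : ∀ t > 0, logSpeedSq W t ≤ C * poleDefect W t) {r₀ : ℝ} (hr₀ : 0 < r₀)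
    (hne : poleDefect W r₀ ≠ 0) (hr : r₀ ≤ r) : poleDefect W r ≠ 0 := by
  refine mt (fun hzero => ?_) hne
  refine eq_zero_of_norm_deriv_le_mul_of_eq_zero_right (K := (C + 1) / r₀)
    (fun t ht => hW.hasDerivAt_poleDefect (hr₀.trans_le ht.1)) (fun t ht => ?_) hzero
    r₀ (left_mem_Icc.2 hr)
  have ht₀ : 0 < t := hr₀.trans_le ht.1
  rw [norm_neg, Real.norm_eq_abs, Real.norm_eq_abs, div_mul_eq_mul_div, le_div_iff₀ hr₀]
  calc |dot3 (deriv W t) e0| * r₀ ≤ |dot3 (deriv W t) e0| * t := by gcongr; exact ht.1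
    _ = |t * dot3 (deriv W t) e0| := by rw [abs_mul, abs_of_pos ht₀, mul_comm]
    _ ≤ (C + 1) * poleDefect W t := hW.abs_mul_deriv_le (Ioi_mem_nhds ht₀) hC (hU t ht₀)
    _ ≤ (C + 1) * |poleDefect W t| := by gcongr; exact le_abs_self _

theorem isMomentumOn_Ici (hW : IsSimProfile k b c μ (Ioi 0) W) (hr : 0 < r) :
    IsMomentumOn (reducedMomentum c W) (poleDefect W) (Ici r) :=
  (hW.isMomentumOn isOpen_Ioi).mono (Ici_subset_Ioi.2 hr)

theorem norm_reducedMomentum_le (hW : IsSimProfile k b c μ (Ioi 0) W) (hC : 0 ≤ C)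
    (hU : ∀ t > 0, logSpeedSq W t ≤ C * poleDefect W t) (hr : 0 < r) :
    ‖reducedMomentum c W r‖ ≤ (C + 1 + |c|) * 2 :=
  (hW.abs_reducedMomentum_le (Ioi_mem_nhds hr) hC (hU r hr)).trans
    (by gcongr; exact (hW.poleDefect_mem_Icc hr).2)

theorem exists_tendsto_poleDefect (hW : IsSimProfile k b c μ (Ioi 0) W) (hC : 0 ≤ C)
    (hU : ∀ t > 0, logSpeedSq W t ≤ C * poleDefect W t) (hne : ∃ r > 0, poleDefect W r ≠ 0) :
    ∃ l ∈ Ioc 0 2, Tendsto (poleDefect W) atTop (𝓝 l) := by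
  obtain ⟨r₀, hr₀, hne⟩ := hne
  have hmom := hW.isMomentumOn_Ici hr₀
  obtain ⟨l, hl⟩ := hmom.exists_tendsto hr₀ fun r hr =>
    hW.norm_reducedMomentum_le hC hU (hr₀.trans_le hr)
  have hmem : l ∈ Icc 0 2 := isClosed_Icc.mem_of_tendsto hl <| by
    filter_upwards [eventually_gt_atTop 0] with r hr using hW.poleDefect_mem_Icc hr
  refine ⟨l, ⟨hmem.1.lt_of_ne ?_, hmem.2⟩, hl⟩
  rintro rfl
  have hvanish := hmom.eventually_eq_limit hr₀ (A := C + 1 + |c|) (fun r hr => ?_) hl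
  · obtain ⟨r, hzero, hr⟩ := (hvanish.and (eventually_ge_atTop r₀)).exists
    exact hW.poleDefect_ne_zero_of_le hC hU hr₀ hne hr hzero
  · have hr' : 0 < r := hr₀.trans_le hr
    rw [sub_zero, Real.norm_of_nonneg (hW.poleDefect_mem_Icc hr').1]
    exact hW.abs_reducedMomentum_le (Ioi_mem_nhds hr') hC (hU r hr')

theorem poleDefect_sub_isBigO (hW : IsSimProfile k b c μ (Ioi 0) W) (hC : 0 ≤ C)
    (hU : ∀ t > 0, logSpeedSq W t ≤ C * poleDefect W t)
    (hl : Tendsto (poleDefect W) atTop (𝓝 l)) :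
    (fun r => poleDefect W r - l) =O[atTop] (fun r : ℝ => (r ^ 2)⁻¹) := by
  refine IsBigO.of_bound (4 * ((C + 1 + |c|) * 2)) ?_
  filter_upwards [eventually_gt_atTop 0] with r hr
  rw [norm_inv, Real.norm_of_nonneg (sq_nonneg r)]
  exact (hW.isMomentumOn_Ici hr).norm_sub_limit_le hr
    (fun t ht => hW.norm_reducedMomentum_le hC hU (hr.trans_le ht)) hl

theorem sqrt_two_sub_poleDefect_isBigO (hW : IsSimProfile k b c μ (Ioi 0) W) (hC : 0 ≤ C)
    (hU : ∀ t > 0, logSpeedSq W t ≤ C * poleDefect W t)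
    (hl : Tendsto (poleDefect W) atTop (𝓝 2)) :
    (fun r => √(2 - poleDefect W r)) =O[atTop] (fun r : ℝ => (r ^ 2)⁻¹) := by
  have hnorm {t : ℝ} (ht : 0 < t) : ‖poleDefect W t - 2‖ = 2 - poleDefect W t := by
    rw [norm_sub_rev, Real.norm_of_nonneg (sub_nonneg.2 (hW.poleDefect_mem_Icc ht).2)]
  refine IsBigO.of_bound (4 * (C + 1 + 2 * |c|)) ?_
  filter_upwards [eventually_gt_atTop 0] with r hr
  rw [norm_inv, Real.norm_of_nonneg (sq_nonneg r), Real.norm_of_nonneg (Real.sqrt_nonneg _),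
    ← hnorm hr]
  refine ((hW.isMomentumOn_Ici hr).sub_const (2 * c)).sqrt_norm_sub_limit_le hr (by positivity)
    (fun t ht => ?_) hl
  have ht₀ : 0 < t := hr.trans_le ht
  rw [hnorm ht₀]
  exact hW.abs_reducedMomentum_sub_le (Ioi_mem_nhds ht₀) hC (hU t ht₀)

theorem colatitude_sub_isBigO (hW : IsSimProfile k b c μ (Ioi 0) W) (hC : 0 ≤ C)
    (hU : ∀ t > 0, logSpeedSq W t ≤ C * poleDefect W t) (hl₀ : l ∈ Ioc 0 2)
    (hl : Tendsto (poleDefect W) atTop (𝓝 l)) :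
    (fun r => colatitude W r - Real.arccos (1 - l)) =O[atTop] (fun r : ℝ => (r ^ 2)⁻¹) := by
  have hcol (r : ℝ) : colatitude W r = Real.arccos (1 - poleDefect W r) := by
    rw [colatitude, poleDefect, sub_sub_cancel]
  rcases hl₀.2.eq_or_lt with rfl | hl₂
  · refine IsBigO.trans (IsBigO.of_bound Real.pi ?_) (hW.sqrt_two_sub_poleDefect_isBigO hC hU hl)
    filter_upwards [eventually_gt_atTop 0] with r hr
    obtain ⟨hF₀, hF₂⟩ := hW.poleDefect_mem_Icc hr
    have hbound := arccos_le_pi_mul_sqrt (x := -(1 - poleDefect W r)) (by linarith) (by linarith)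
    rw [Real.arccos_neg, show 1 - -(1 - poleDefect W r) = 2 - poleDefect W r by ring] at hbound
    rw [hcol, show (1 - 2 : ℝ) = -1 by norm_num, Real.arccos_neg_one, norm_sub_rev,
      Real.norm_of_nonneg (sub_nonneg.2 (Real.arccos_le_pi _)),
      Real.norm_of_nonneg (Real.sqrt_nonneg _)]
    exact hbound
  · have hdiff : (fun F => Real.arccos (1 - F) - Real.arccos (1 - l)) =O[𝓝 l] fun F => F - l :=
      ((Real.hasDerivAt_arccos (by linarith) (by linarith [hl₀.1])).comp_const_sub 1 l).isBigO_sub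
    simpa only [hcol, Function.comp_def] using
      (hdiff.comp_tendsto hl).trans (hW.poleDefect_sub_isBigO hC hU hl)

end Asymptotics

section InitialData

theorem tendsto_axialMomentum_zero (hW : IsSimProfile k b c μ (Ioi 0) W)
    (h0 : Tendsto W (𝓝[>] 0) (𝓝 e0))
    (h1 : Tendsto (fun t => t * norm3 (deriv W t)) (𝓝[>] 0) (𝓝 0)) :
    Tendsto (axialMomentum W) (𝓝[>] 0) (𝓝 0) := by
  have hF := tendsto_poleDefect_zero h0
  have hsqrt := ((tendsto_logSpeedSq_zero h1).mul (hF.mul (hF.const_sub 2))).sqrt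
  simp only [zero_mul, Real.sqrt_zero] at hsqrt
  refine squeeze_zero_norm' ?_ hsqrt
  filter_upwards [self_mem_nhdsWithin] with t ht
  exact Real.abs_le_sqrt (hW.axialMomentum_sq_le (Ioi_mem_nhds ht))

theorem tendsto_reducedEnergy_zero (hW : IsSimProfile k b c μ (Ioi 0) W)
    (h0 : Tendsto W (𝓝[>] 0) (𝓝 e0))
    (h1 : Tendsto (fun t => t * norm3 (deriv W t)) (𝓝[>] 0) (𝓝 0)) :
    Tendsto (reducedEnergy k b c μ W) (𝓝[>] 0) (𝓝 0) := by
  have hF := tendsto_poleDefect_zero h0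
  have hpot := ((differentiable_gfun k b).continuous.tendsto 1).comp (tendsto_dot3_e0 h0)
  have hsum := (((tendsto_logSpeedSq_zero h1).div_const 2).add hpot).sub
    (((hW.tendsto_axialMomentum_zero h0 h1).add (hF.const_mul c)).const_mul (2 * μ))
  simp only [gfun_one, zero_div, mul_zero, add_zero, sub_zero] at hsum
  exact hsum

theorem reducedEnergy_eq_zero (hW : IsSimProfile k b c μ (Ioi 0) W)
    (h0 : Tendsto W (𝓝[>] 0) (𝓝 e0))
    (h1 : Tendsto (fun t => t * norm3 (deriv W t)) (𝓝[>] 0) (𝓝 0)) (hr : 0 < r) :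
    reducedEnergy k b c μ W r = 0 := by
  have hderiv {t : ℝ} (ht : 0 < t) := hW.hasDerivAt_reducedEnergy (Ioi_mem_nhds ht)
  refine tendsto_nhds_unique (tendsto_const_nhds.congr' ?_) (hW.tendsto_reducedEnergy_zero h0 h1)
  filter_upwards [self_mem_nhdsWithin] with t ht
  exact isOpen_Ioi.is_const_of_deriv_eq_zero isPreconnected_Ioi
    (fun t ht => (hderiv ht).differentiableAt.differentiableWithinAt)
    (fun t ht => (hderiv ht).deriv) hr ht

theorem logSpeedSq_eq (hW : IsSimProfile k b c μ (Ioi 0) W)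
    (h0 : Tendsto W (𝓝[>] 0) (𝓝 e0))
    (h1 : Tendsto (fun t => t * norm3 (deriv W t)) (𝓝[>] 0) (𝓝 0)) (hr : 0 < r) :
    logSpeedSq W r = -2 * gfun k b (dot3 (W r) e0) + 4 * μ * reducedMomentum c W r := by
  have hE := hW.reducedEnergy_eq_zero h0 h1 hr
  rw [reducedEnergy] at hE
  linarith

-- The momentum term `4 * μ * N` of `logSpeedSq_eq` costs only half of `logSpeedSq`, by AM-GM.
theorem exists_logSpeedSq_le (hW : IsSimProfile k b c μ (Ioi 0) W)
    (h0 : Tendsto W (𝓝[>] 0) (𝓝 e0))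
    (h1 : Tendsto (fun t => t * norm3 (deriv W t)) (𝓝[>] 0) (𝓝 0)) :
    ∃ C ≥ 0, ∀ r > 0, logSpeedSq W r ≤ C * poleDefect W r := by
  set A : ℝ := 2 * (|k ^ 2 + b * k| + 3 * k ^ 2) + 4 * |μ * c|
  refine ⟨2 * (A + 16 * μ ^ 2), by positivity, fun r hr => ?_⟩
  have hF₀ := (hW.poleDefect_mem_Icc hr).1
  have hpot : -gfun k b (dot3 (W r) e0) ≤ (|k ^ 2 + b * k| + 3 * k ^ 2) * poleDefect W r :=
    neg_gfun_le k b (dot3_e0_mem_Icc (hW.dot3_self hr))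
  have hcor : μ * c * poleDefect W r ≤ |μ * c| * poleDefect W r := by
    gcongr
    exact le_abs_self _
  have hmom : 2 * (4 * μ) * axialMomentum W r ≤
      logSpeedSq W r + (4 * μ) ^ 2 * (2 * poleDefect W r) := by
    refine two_mul_mul_le_add_of_sq_le _ (logSpeedSq_nonneg W r) (by positivity)
      ((hW.axialMomentum_sq_le (Ioi_mem_nhds hr)).trans ?_)
    exact mul_le_mul_of_nonneg_left (by nlinarith) (logSpeedSq_nonneg W r)
  have henergy := hW.logSpeedSq_eq h0 h1 hr
  rw [reducedMomentum] at henergy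
  simp only [A]
  linarith

theorem Hfun_colatitude_nonneg (hW : IsSimProfile k b c μ (Ioi 0) W)
    (h0 : Tendsto W (𝓝[>] 0) (𝓝 e0))
    (h1 : Tendsto (fun t => t * norm3 (deriv W t)) (𝓝[>] 0) (𝓝 0)) (hr : 0 < r) :
    0 ≤ Hfun k b c μ (colatitude W r) := by
  obtain ⟨hF₀, hF₂⟩ := hW.poleDefect_mem_Icc hr
  have hH : Hfun k b c μ (colatitude W r) = logSpeedSq W r - 2 * (2 * μ) * axialMomentum W r +
      (2 * μ) ^ 2 * (poleDefect W r * (2 - poleDefect W r)) := by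
    rw [colatitude, Hfun_arccos (dot3_e0_mem_Icc (hW.dot3_self hr)), hW.logSpeedSq_eq h0 h1 hr,
      reducedMomentum, poleDefect]
    ring
  have hmom := two_mul_mul_le_add_of_sq_le (2 * μ) (logSpeedSq_nonneg W r)
    (mul_nonneg hF₀ (sub_nonneg.2 hF₂)) (hW.axialMomentum_sq_le (Ioi_mem_nhds hr))
  linarith

theorem exists_colatitude_eq (hW : IsSimProfile k b c μ (Ioi 0) W)
    (h0 : Tendsto W (𝓝[>] 0) (𝓝 e0)) (hr : 0 < r) {s : ℝ} (hs : s ∈ Ioc 0 (colatitude W r)) :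
    ∃ t > 0, colatitude W t = s := by
  have hsmall : ∀ᶠ t in 𝓝[>] (0 : ℝ), colatitude W t < s :=
    (tendsto_colatitude_zero h0).eventually_lt_const hs.1
  obtain ⟨t, ⟨hts, ht⟩, htr⟩ :=
    ((hsmall.and self_mem_nhdsWithin).and (nhdsWithin_le_nhds (Iio_mem_nhds hr))).exists
  have hpos {z : ℝ} (hz : z ∈ Icc t r) : 0 < z := (mem_Ioi.1 ht).trans_le hz.1
  obtain ⟨z, hz, hzs⟩ := intermediate_value_Icc htr.le
    (hW.continuousOn_colatitude.mono fun z hz => hpos hz) ⟨hts.le, hs.2⟩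
  exact ⟨z, hpos hz, hzs⟩

theorem limit_colatitude_le_sSup (hW : IsSimProfile k b c μ (Ioi 0) W)
    (h0 : Tendsto W (𝓝[>] 0) (𝓝 e0))
    (h1 : Tendsto (fun t => t * norm3 (deriv W t)) (𝓝[>] 0) (𝓝 0)) {s : ℝ} (hs : 0 < s)
    (hlim : Tendsto (colatitude W) atTop (𝓝 s)) :
    (s : EReal) ≤ sSup ((fun x : ℝ => (x : EReal)) ''
      {shat : ℝ | 0 < shat ∧ ∀ s ∈ Ioc (0 : ℝ) shat, 0 ≤ Hfun k b c μ s}) := by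
  refine le_of_tendsto ((continuous_coe_real_ereal.tendsto s).comp hlim) ?_
  filter_upwards [hlim.eventually_const_lt hs, eventually_gt_atTop 0] with r hsr hr
  refine le_sSup ⟨colatitude W r, ⟨hsr, fun x hx => ?_⟩, rfl⟩
  obtain ⟨t, ht, rfl⟩ := hW.exists_colatitude_eq h0 hr hx
  exact hW.Hfun_colatitude_nonneg h0 h1 ht

end InitialData

end IsSimProfile

theorem stmt16_general (k b c μ : ℝ) (W : ℝ → Fin 3 → ℝ)
    (hprof : IsSimProfile k b c μ (Ioi 0) W)
    (hnonconst : ∃ r₁ > (0 : ℝ), ∃ r₂ > (0 : ℝ), W r₁ ≠ W r₂)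
    (hlim0 : Tendsto W (𝓝[>] 0) (𝓝 e0))
    (hlim1 : Tendsto (fun r => r * norm3 (deriv W r)) (𝓝[>] 0) (𝓝 0)) :
    ∃ sstar : ℝ,
      Tendsto (fun r => Real.arccos (dot3 (W r) e0)) atTop (𝓝 sstar) ∧
      0 < sstar ∧
      ((sstar : EReal) ≤
        min ((Real.pi : ℝ) : EReal)
          (sSup ((fun x : ℝ => (x : EReal)) ''
            {shat : ℝ | 0 < shat ∧ ∀ s ∈ Ioc (0 : ℝ) shat, 0 ≤ Hfun k b c μ s}))) ∧
      (fun r => Real.arccos (dot3 (W r) e0) - sstar)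
        =O[atTop] (fun r : ℝ => (r ^ 2)⁻¹) := by
  obtain ⟨C, hC, hspeed⟩ := hprof.exists_logSpeedSq_le hlim0 hlim1
  obtain ⟨l, hl₀, hl⟩ :=
    hprof.exists_tendsto_poleDefect hC hspeed (hprof.exists_poleDefect_ne_zero hnonconst)
  have hlim := tendsto_colatitude hl
  have hpos : 0 < Real.arccos (1 - l) := Real.arccos_pos.2 (by linarith [hl₀.1])
  exact ⟨Real.arccos (1 - l), hlim, hpos,
    le_min (EReal.coe_le_coe (Real.arccos_le_pi _))
      (hprof.limit_colatitude_le_sSup hlim0 hlim1 hpos hlim),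
    hprof.colatitude_sub_isBigO hC hspeed hl₀ hl⟩

/-- Sphere case, `c² < −4(bk + k²)`: for a nonconstant similarity spherical profile
emanating from the north pole, `s(r) = arccos(W(r)·e₀)` converges to some
`s⋆ ∈ (0, min{π, s₁}]` at rate `O(r⁻²)`, where
`s₁ = sup{ŝ > 0 : H ≥ 0 on (0,ŝ]}`. -/
theorem stmt16 (k b c μ : ℝ) (hb : c ^ 2 < -4 * (b * k + k ^ 2))
    (W : ℝ → Fin 3 → ℝ)
    (hprof : IsSimProfile k b c μ (Ioi 0) W)
    (hnonconst : ∃ r₁ > (0:ℝ), ∃ r₂ > (0:ℝ), W r₁ ≠ W r₂)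
    (hlim0 : Tendsto W (nhdsWithin 0 (Ioi 0)) (nhds e0))
    (hlim1 : Tendsto (fun r => r * norm3 (deriv W r)) (nhdsWithin 0 (Ioi 0)) (nhds 0)) :
    ∃ sstar : ℝ,
      Tendsto (fun r => Real.arccos (dot3 (W r) e0)) atTop (nhds sstar) ∧
      0 < sstar ∧
      ((sstar : EReal) ≤
        min ((Real.pi : ℝ) : EReal)
          (sSup ((fun x : ℝ => (x : EReal)) ''
            {shat : ℝ | 0 < shat ∧ ∀ s ∈ Ioc (0:ℝ) shat, 0 ≤ Hfun k b c μ s}))) ∧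
      (fun r => Real.arccos (dot3 (W r) e0) - sstar)
        =O[atTop] (fun r : ℝ => (r ^ 2)⁻¹) :=
  stmt16_general k b c μ W hprof hnonconst hlim0 hlim1
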